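/- arXiv:1809.04091 — 4 statements merged into one kernel-verified Lean document; each statement's English description precedes it below -/
import Mathlib

section
/- Let 0 < μ ≤ L, let g_1,…,g_n : ℝ^D → ℝ be differentiable functions, each μ-strongly convex with L-Lipschitz continuous gradient, and let g = (1/n)·Σ_{i=1}^n g_i. Then for all w, w_* ∈ ℝ^D: ⟨∇g(w), w_* − w⟩ ≤ ((L−μ)/L)·[g(w_*) − g(w)] − (μ/2)·‖w_* − w‖² − (1/(2Ln))·Σ_{i=1}^n ‖∇g_i(w_*) − ∇g_i(w)‖² − (μ/L)·⟨∇g(w_*), w − w_*⟩. -/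
open scoped RealInnerProductSpace

/-! A function `f` that is `μ`-strongly convex with `L`-Lipschitz gradient differs by
`μ / 2 * ‖·‖ ^ 2` from a convex function whose Bregman divergence is at most
`(L - μ) / 2 * ‖y - x‖ ^ 2`. For such a function, moving from `y` in the direction opposite to
`∇f y - ∇f x` keeps the divergence from `x` nonnegative, which gives a nonnegative quadratic in the
step length; its discriminant bounds `‖∇f y - ∇f x‖ ^ 2` by a multiple of the divergence.
Translated back to `f`, this is linear in `f`, `∇f` and `‖∇f y - ∇f x‖ ^ 2`, so it can be averaged
over the summands. -/

section Bregman

variable {E : Type*} [NormedAddCommGroup E] [InnerProductSpace ℝ E]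

/-- The Bregman divergence of `f` at `y` relative to `x`, used to express strong convexity as a
lower bound and smoothness as an upper bound on one quantity. The gradient `f'` is a separate
argument, so that algebraic facts need no differentiability. -/
def bregmanDiv (f : E → ℝ) (f' : E → E) (y x : E) : ℝ :=
  f y - f x - ⟪f' x, y - x⟫

variable {f : E → ℝ} {f' : E → E}

theorem bregmanDiv_three_point (f : E → ℝ) (f' : E → E) (z y x : E) :
    bregmanDiv f f' z x =
      bregmanDiv f f' z y + bregmanDiv f f' y x + ⟪f' y - f' x, z - y⟫ := by
  have hsplit : ⟪f' x, z - x⟫ = ⟪f' x, z - y⟫ + ⟪f' x, y - x⟫ := by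
    rw [← inner_add_right, sub_add_sub_cancel]
  simp only [bregmanDiv, inner_sub_left, hsplit]
  ring

theorem bregmanDiv_sub_quadratic (f : E → ℝ) (f' : E → E) (μ : ℝ) (y x : E) :
    bregmanDiv (fun u ↦ f u - μ / 2 * ‖u‖ ^ 2) (fun u ↦ f' u - μ • u) y x =
      bregmanDiv f f' y x - μ / 2 * ‖y - x‖ ^ 2 := by
  simp only [bregmanDiv, inner_sub_left, inner_sub_right, real_inner_smul_left,
    real_inner_self_eq_norm_sq, norm_sub_sq_real, real_inner_comm y x]
  ring

theorem bregmanDiv_le_of_lipschitz_gradient [CompleteSpace E] {L : ℝ}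
    (hf : ∀ x, HasGradientAt f (f' x) x) (hlip : ∀ u v, ‖f' u - f' v‖ ≤ L * ‖u - v‖) (y x : E) :
    bregmanDiv f f' y x ≤ L / 2 * ‖y - x‖ ^ 2 := by
  set p := y - x with hp
  have hdiv (t : ℝ) : HasDerivAt (fun t : ℝ ↦ bregmanDiv f f' (x + t • p) x)
      ⟪f' (x + t • p) - f' x, p⟫ t := by
    have hline : HasDerivAt (fun t : ℝ ↦ x + t • p) p t := by
      simpa using ((hasDerivAt_id t).smul_const p).const_add x
    have hcomp := (hf (x + t • p)).hasFDerivAt.comp_hasDerivAt t hline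
    have hlin := (hasDerivAt_id t).mul_const ⟪f' x, p⟫
    simpa [bregmanDiv, inner_sub_left, real_inner_smul_right, Function.comp_def]
      using (hcomp.sub_const (f x)).fun_sub hlin
  have hquad (t : ℝ) : HasDerivAt (fun t : ℝ ↦ L / 2 * ‖p‖ ^ 2 * t ^ 2) (L * ‖p‖ ^ 2 * t) t :=
    ((hasDerivAt_pow 2 t).const_mul (L / 2 * ‖p‖ ^ 2)).congr_deriv (by norm_num; ring)
  have hderiv_le (t : ℝ) (ht : 0 ≤ t) : ⟪f' (x + t • p) - f' x, p⟫ ≤ L * ‖p‖ ^ 2 * t :=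
    calc ⟪f' (x + t • p) - f' x, p⟫
        ≤ ‖f' (x + t • p) - f' x‖ * ‖p‖ := real_inner_le_norm _ _
      _ ≤ L * ‖x + t • p - x‖ * ‖p‖ := by gcongr; exact hlip _ _
      _ = L * ‖p‖ ^ 2 * t := by
        rw [add_sub_cancel_left, norm_smul, Real.norm_of_nonneg ht]; ring
  have hle := image_le_of_deriv_right_le_deriv_boundary (a := 0) (b := 1)
    (fun t _ ↦ (hdiv t).continuousAt.continuousWithinAt)
    (fun t _ ↦ (hdiv t).hasDerivWithinAt) (by simp [bregmanDiv])
    (fun t _ ↦ (hquad t).continuousAt.continuousWithinAt)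
    (fun t _ ↦ (hquad t).hasDerivWithinAt) (fun t ht ↦ hderiv_le t ht.1)
    (Set.right_mem_Icc.2 zero_le_one)
  simpa [hp] using hle

theorem norm_gradient_sub_sq_le_bregmanDiv {M : ℝ} (hconv : ∀ u v, 0 ≤ bregmanDiv f f' u v)
    (hsmooth : ∀ u v, bregmanDiv f f' u v ≤ M / 2 * ‖u - v‖ ^ 2) (y x : E) :
    ‖f' y - f' x‖ ^ 2 ≤ 2 * M * bregmanDiv f f' y x := by
  set e := f' y - f' x with he
  have hstep (t : ℝ) :
      0 ≤ M / 2 * ‖e‖ ^ 2 * (t * t) + -‖e‖ ^ 2 * t + bregmanDiv f f' y x := by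
    have hupper := hsmooth (y - t • e) y
    have hlower := hconv (y - t • e) x
    rw [bregmanDiv_three_point f f' _ y, ← he] at hlower
    simp only [sub_sub_cancel_left, norm_neg, norm_smul, mul_pow, Real.norm_eq_abs, sq_abs,
      inner_neg_right, real_inner_smul_right, real_inner_self_eq_norm_sq] at hupper hlower
    linarith
  -- The discriminant, unlike the step length `1 / M`, also covers `M = 0`.
  have hdiscrim : ‖e‖ ^ 2 * ‖e‖ ^ 2 ≤ ‖e‖ ^ 2 * (2 * M * bregmanDiv f f' y x) := by
    have := discrim_le_zero hstep
    rw [discrim] at this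
    linarith
  rcases (sq_nonneg ‖e‖).eq_or_lt with hzero | hpos
  · rw [← hzero]
    rcases le_total 0 M with hM | hM
    · exact mul_nonneg (by positivity) (hconv y x)
    · have hdiv : bregmanDiv f f' y x ≤ 0 :=
        (hsmooth y x).trans (mul_nonpos_of_nonpos_of_nonneg (by linarith) (sq_nonneg _))
      exact mul_nonneg_of_nonpos_of_nonpos (by linarith) hdiv
  · exact le_of_mul_le_mul_left hdiscrim hpos

theorem norm_gradient_sub_smul_sq_le_bregmanDiv {μ L : ℝ}
    (hsc : ∀ u v, μ / 2 * ‖u - v‖ ^ 2 ≤ bregmanDiv f f' u v)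
    (hsmooth : ∀ u v, bregmanDiv f f' u v ≤ L / 2 * ‖u - v‖ ^ 2) (y x : E) :
    ‖f' y - f' x - μ • (y - x)‖ ^ 2 ≤
      2 * (L - μ) * (bregmanDiv f f' y x - μ / 2 * ‖y - x‖ ^ 2) := by
  have hshift := norm_gradient_sub_sq_le_bregmanDiv (M := L - μ)
    (f := fun u ↦ f u - μ / 2 * ‖u‖ ^ 2) (f' := fun u ↦ f' u - μ • u)
    (fun u v ↦ by rw [bregmanDiv_sub_quadratic]; linarith [hsc u v])
    (fun u v ↦ by rw [bregmanDiv_sub_quadratic]; linarith [hsmooth u v]) y x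
  rwa [bregmanDiv_sub_quadratic, sub_sub_sub_comm, ← smul_sub] at hshift

theorem inner_gradient_le_of_bregmanDiv_bounds {μ L : ℝ} (hL : 0 < L)
    (hsc : ∀ u v, μ / 2 * ‖u - v‖ ^ 2 ≤ bregmanDiv f f' u v)
    (hsmooth : ∀ u v, bregmanDiv f f' u v ≤ L / 2 * ‖u - v‖ ^ 2) (x y : E) :
    ⟪f' x, y - x⟫ ≤ (L - μ) / L * (f y - f x) - μ / 2 * ‖y - x‖ ^ 2
      - 1 / (2 * L) * ‖f' y - f' x‖ ^ 2 - μ / L * ⟪f' y, x - y⟫ := by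
  have hbound := norm_gradient_sub_smul_sq_le_bregmanDiv hsc hsmooth y x
  rw [norm_sub_sq_real, real_inner_smul_right, inner_sub_left, norm_smul, mul_pow,
    Real.norm_eq_abs, sq_abs, bregmanDiv] at hbound
  rw [← neg_sub y x, inner_neg_right]
  refine le_of_mul_le_mul_left ?_ hL
  field_simp
  linarith

end Bregman

section FiniteSum

variable {E ι : Type*} [NormedAddCommGroup E] [InnerProductSpace ℝ E] [CompleteSpace E]

theorem hasGradientAt_const_mul_sum {s : Finset ι} {g : ι → E → ℝ} {g' : ι → E} {x : E} (c : ℝ)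
    (hg : ∀ i ∈ s, HasGradientAt (g i) (g' i) x) :
    HasGradientAt (fun u ↦ c * ∑ i ∈ s, g i u) (c • ∑ i ∈ s, g' i) x := by
  rw [hasGradientAt_iff_hasFDerivAt, map_smulₛₗ, map_sum]
  exact (HasFDerivAt.fun_sum fun i hi ↦ (hg i hi).hasFDerivAt).const_mul c

theorem saga_inner_product_bound_general [Fintype ι] [Nonempty ι] {μ L : ℝ} (hL : 0 < L)
    {g : ι → E → ℝ} {g' : ι → E → E} (hdiff : ∀ i w, HasGradientAt (g i) (g' i w) w)
    (hsc : ∀ i u v, g i u ≥ g i v + ⟪g' i v, u - v⟫ + μ / 2 * ‖u - v‖ ^ 2)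
    (hlip : ∀ i u v, ‖g' i u - g' i v‖ ≤ L * ‖u - v‖)
    {G : E → ℝ} {G' : E → E} (hG : ∀ w, G w = (1 / Fintype.card ι : ℝ) * ∑ i, g i w)
    (hG' : ∀ w, HasGradientAt G (G' w) w) (w wstar : E) :
    ⟪G' w, wstar - w⟫ ≤
      (L - μ) / L * (G wstar - G w) - μ / 2 * ‖wstar - w‖ ^ 2
        - 1 / (2 * L * Fintype.card ι) * ∑ i, ‖g' i wstar - g' i w‖ ^ 2
        - μ / L * ⟪G' wstar, w - wstar⟫ := by
  have hgrad (v : E) : G' v = (1 / Fintype.card ι : ℝ) • ∑ i, g' i v :=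
    (hG' v).unique (funext hG ▸ hasGradientAt_const_mul_sum _ fun i _ ↦ hdiff i v)
  have hsum := Finset.sum_le_sum fun i (_ : i ∈ Finset.univ) ↦
    inner_gradient_le_of_bregmanDiv_bounds (μ := μ) hL
      (fun u v ↦ by rw [bregmanDiv]; linarith [hsc i u v])
      (bregmanDiv_le_of_lipschitz_gradient (hdiff i) (hlip i)) w wstar
  simp only [Finset.sum_sub_distrib, ← Finset.mul_sum, Finset.sum_const, Finset.card_univ,
    nsmul_eq_mul] at hsum
  have hcard : (0 : ℝ) < Fintype.card ι := Nat.cast_pos.2 Fintype.card_pos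
  simp only [hgrad, hG, real_inner_smul_left, sum_inner]
  refine (mul_le_mul_of_nonneg_left hsum (one_div_pos.2 hcard).le).trans_eq ?_
  field_simp

end FiniteSum

/-- (First auxiliary lemma for A-SAGA.) If each `g_i` is `μ`-strongly
convex with `L`-Lipschitz gradient (`0 < μ ≤ L`) and `g = (1/n)·Σ_i g_i`, then for all
`w, w_*`:
`⟨∇g(w), w_*−w⟩ ≤ ((L−μ)/L)[g(w_*)−g(w)] − (μ/2)‖w_*−w‖²
  − (1/(2Ln))·Σ_i ‖∇g_i(w_*)−∇g_i(w)‖² − (μ/L)⟨∇g(w_*), w−w_*⟩`. -/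
theorem saga_inner_product_bound {D n : ℕ} (hn : 0 < n) (μ L : ℝ)
    (hμ : 0 < μ) (hμL : μ ≤ L)
    (g : Fin n → EuclideanSpace ℝ (Fin D) → ℝ)
    (g' : Fin n → EuclideanSpace ℝ (Fin D) → EuclideanSpace ℝ (Fin D))
    (hdiff : ∀ i w, HasGradientAt (g i) (g' i w) w)
    (hsc : ∀ i, ∀ u v : EuclideanSpace ℝ (Fin D),
      g i u ≥ g i v + ⟪g' i v, u - v⟫ + (μ / 2) * ‖u - v‖ ^ 2)
    (hlip : ∀ i, ∀ u v : EuclideanSpace ℝ (Fin D),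
      ‖g' i u - g' i v‖ ≤ L * ‖u - v‖)
    (G : EuclideanSpace ℝ (Fin D) → ℝ)
    (G' : EuclideanSpace ℝ (Fin D) → EuclideanSpace ℝ (Fin D))
    (hG : ∀ w, G w = (1 / n : ℝ) * ∑ i, g i w)
    (hG' : ∀ w, HasGradientAt G (G' w) w)
    (w wstar : EuclideanSpace ℝ (Fin D)) :
    ⟪G' w, wstar - w⟫ ≤
      (L - μ) / L * (G wstar - G w) - (μ / 2) * ‖wstar - w‖ ^ 2
        - (1 / (2 * L * n)) * ∑ i, ‖g' i wstar - g' i w‖ ^ 2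
        - (μ / L) * ⟪G' wstar, w - wstar⟫ := by
  have : Nonempty (Fin n) := Fin.pos_iff_nonempty.1 hn
  simpa using saga_inner_product_bound_general (hμ.trans_le hμL) hdiff hsc hlip (by simpa using hG)
    hG' w wstar
end

section
/- Let g_1,…,g_n : ℝ^D → ℝ be differentiable, g = (1/n)·Σ_{i=1}^n g_i, let φ_1,…,φ_n, w, w_* ∈ ℝ^D, and let α > 0. For each j ∈ {1,…,n} define X_j = ∇g_j(w) − ∇g_j(φ_j) + (1/n)·Σ_{i=1}^n ∇g_i(φ_i) − ∇g(w_*). Then: (i) the average over j satisfies (1/n)·Σ_{j=1}^n X_j = ∇g(w) − ∇g(w_*); and (ii) (1/n)·Σ_{j=1}^n ‖X_j‖² ≤ (1 + α^{-1})·(1/n)·Σ_{j=1}^n ‖∇g_j(φ_j) − ∇g_j(w_*)‖² + (1 + α)·(1/n)·Σ_{j=1}^n ‖∇g_j(w) − ∇g_j(w_*)‖² − α·‖∇g(w) − ∇g(w_*)‖². -/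
open scoped RealInnerProductSpace

/-! Averaging over `j`, put `a j = ∇g_j(w) - ∇g_j(w_*)` and `b j = ∇g_j(φ_j) - ∇g_j(w_*)`, with
means `A` and `B`. Then `X_j = ((a j - A) - (b j - B)) + A` is a centred vector plus a constant, so
its second moment is that of the centred part plus `‖A‖²`. Young's inequality splits the centred
part into `1 + α` times the variance of `a` and `1 + α⁻¹` times the variance of `b`; the former is
the second moment of `a` minus `‖A‖²`, the latter is at most the second moment of `b`. -/

section Young

variable {E : Type*} [SeminormedAddCommGroup E]

theorem norm_sub_sq_le_one_add_mul_add_one_add_inv_mul (a b : E) {α : ℝ} (hα : 0 < α) :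
    ‖a - b‖ ^ 2 ≤ (1 + α) * ‖a‖ ^ 2 + (1 + α⁻¹) * ‖b‖ ^ 2 :=
  calc ‖a - b‖ ^ 2 ≤ (‖a‖ + ‖b‖) ^ 2 := by gcongr; exact norm_sub_le a b
    _ = ‖a‖ ^ 2 + 2 * ‖a‖ * ‖b‖ + ‖b‖ ^ 2 := add_sq _ _
    _ ≤ ‖a‖ ^ 2 + (α * ‖a‖ ^ 2 + α⁻¹ * ‖b‖ ^ 2) + ‖b‖ ^ 2 := by
      gcongr; exact two_mul_le_add_mul_sq hα
    _ = (1 + α) * ‖a‖ ^ 2 + (1 + α⁻¹) * ‖b‖ ^ 2 := by ring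

theorem sum_mul_norm_sub_sq_le {ι : Type*} {s : Finset ι} {p : ι → ℝ}
    (hp₀ : ∀ i ∈ s, 0 ≤ p i) (a b : ι → E) {α : ℝ} (hα : 0 < α) :
    ∑ i ∈ s, p i * ‖a i - b i‖ ^ 2 ≤
      (1 + α) * ∑ i ∈ s, p i * ‖a i‖ ^ 2 + (1 + α⁻¹) * ∑ i ∈ s, p i * ‖b i‖ ^ 2 := by
  simp only [Finset.mul_sum, ← Finset.sum_add_distrib]
  refine Finset.sum_le_sum fun i hi => ?_
  calc p i * ‖a i - b i‖ ^ 2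
      ≤ p i * ((1 + α) * ‖a i‖ ^ 2 + (1 + α⁻¹) * ‖b i‖ ^ 2) :=
        mul_le_mul_of_nonneg_left
          (norm_sub_sq_le_one_add_mul_add_one_add_inv_mul (a i) (b i) hα) (hp₀ i hi)
    _ = (1 + α) * (p i * ‖a i‖ ^ 2) + (1 + α⁻¹) * (p i * ‖b i‖ ^ 2) := by ring

end Young

section WeightedMean

theorem sum_smul_sub_const {ι R E : Type*} [Ring R] [AddCommGroup E] [Module R E]
    {s : Finset ι} {p : ι → R} (hp : ∑ i ∈ s, p i = 1) (x : ι → E) (c : E) :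
    ∑ i ∈ s, p i • (x i - c) = ∑ i ∈ s, p i • x i - c := by
  simp only [smul_sub, Finset.sum_sub_distrib, ← Finset.sum_smul, hp, one_smul]

variable {ι E : Type*} {s : Finset ι} {p : ι → ℝ}
  [SeminormedAddCommGroup E] [InnerProductSpace ℝ E]

theorem sum_mul_norm_add_const_sq_of_sum_smul_eq_zero (hp : ∑ i ∈ s, p i = 1) {x : ι → E}
    (hx : ∑ i ∈ s, p i • x i = 0) (c : E) :
    ∑ i ∈ s, p i * ‖x i + c‖ ^ 2 = ∑ i ∈ s, p i * ‖x i‖ ^ 2 + ‖c‖ ^ 2 := by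
  have cross_term : ∑ i ∈ s, p i * ⟪x i, c⟫ = 0 := by
    simp only [← real_inner_smul_left, ← sum_inner, hx, inner_zero_left]
  calc ∑ i ∈ s, p i * ‖x i + c‖ ^ 2
      = ∑ i ∈ s, (p i * ‖x i‖ ^ 2 + 2 * (p i * ⟪x i, c⟫) + p i * ‖c‖ ^ 2) :=
        Finset.sum_congr rfl fun i _ => by rw [norm_add_sq_real]; ring
    _ = ∑ i ∈ s, p i * ‖x i‖ ^ 2 + ‖c‖ ^ 2 := by
        simp only [Finset.sum_add_distrib, ← Finset.mul_sum, ← Finset.sum_mul, cross_term, hp,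
          mul_zero, add_zero, one_mul]

theorem sum_mul_norm_sub_mean_sq (hp : ∑ i ∈ s, p i = 1) (x : ι → E) :
    ∑ i ∈ s, p i * ‖x i - ∑ k ∈ s, p k • x k‖ ^ 2 =
      ∑ i ∈ s, p i * ‖x i‖ ^ 2 - ‖∑ i ∈ s, p i • x i‖ ^ 2 := by
  have centred : ∑ i ∈ s, p i • (x i - ∑ k ∈ s, p k • x k) = 0 := by
    rw [sum_smul_sub_const hp, sub_self]
  rw [eq_sub_iff_add_eq, ← sum_mul_norm_add_const_sq_of_sum_smul_eq_zero hp centred]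
  simp only [sub_add_cancel]

theorem sum_mul_norm_sub_add_mean_sq_le (hp₀ : ∀ i ∈ s, 0 ≤ p i) (hp : ∑ i ∈ s, p i = 1)
    (a b : ι → E) {α : ℝ} (hα : 0 < α) :
    ∑ i ∈ s, p i * ‖a i - b i + ∑ k ∈ s, p k • b k‖ ^ 2 ≤
      (1 + α⁻¹) * ∑ i ∈ s, p i * ‖b i‖ ^ 2 + (1 + α) * ∑ i ∈ s, p i * ‖a i‖ ^ 2
        - α * ‖∑ i ∈ s, p i • a i‖ ^ 2 := by
  set A := ∑ i ∈ s, p i • a i with hA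
  set B := ∑ i ∈ s, p i • b i with hB
  have centred : ∑ i ∈ s, p i • ((a i - A) - (b i - B)) = 0 := by
    simp only [smul_sub _ (_ - A), Finset.sum_sub_distrib, sum_smul_sub_const hp, ← hA, ← hB,
      sub_self]
  calc ∑ i ∈ s, p i * ‖a i - b i + B‖ ^ 2
      = ∑ i ∈ s, p i * ‖((a i - A) - (b i - B)) + A‖ ^ 2 := by
        congr! 4; abel
    _ = ∑ i ∈ s, p i * ‖(a i - A) - (b i - B)‖ ^ 2 + ‖A‖ ^ 2 :=
        sum_mul_norm_add_const_sq_of_sum_smul_eq_zero hp centred A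
    _ ≤ (1 + α) * ∑ i ∈ s, p i * ‖a i - A‖ ^ 2 + (1 + α⁻¹) * ∑ i ∈ s, p i * ‖b i - B‖ ^ 2
          + ‖A‖ ^ 2 := by
        gcongr; exact sum_mul_norm_sub_sq_le hp₀ _ _ hα
    _ = (1 + α) * (∑ i ∈ s, p i * ‖a i‖ ^ 2 - ‖A‖ ^ 2)
          + (1 + α⁻¹) * (∑ i ∈ s, p i * ‖b i‖ ^ 2 - ‖B‖ ^ 2) + ‖A‖ ^ 2 := by
        rw [sum_mul_norm_sub_mean_sq hp a, sum_mul_norm_sub_mean_sq hp b]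
    _ ≤ (1 + α) * (∑ i ∈ s, p i * ‖a i‖ ^ 2 - ‖A‖ ^ 2)
          + (1 + α⁻¹) * ∑ i ∈ s, p i * ‖b i‖ ^ 2 + ‖A‖ ^ 2 := by
        gcongr; exact sub_le_self _ (sq_nonneg _)
    _ = (1 + α⁻¹) * ∑ i ∈ s, p i * ‖b i‖ ^ 2 + (1 + α) * ∑ i ∈ s, p i * ‖a i‖ ^ 2
          - α * ‖A‖ ^ 2 := by ring

end WeightedMean

section Saga

variable {ι E : Type*} {s : Finset ι} {p : ι → ℝ}
  [NormedAddCommGroup E] [InnerProductSpace ℝ E] [CompleteSpace E]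

theorem hasGradientAt_sum_mul {g : ι → E → ℝ} {g' : ι → E} {v : E}
    (hg : ∀ i ∈ s, HasGradientAt (g i) (g' i) v) :
    HasGradientAt (fun u => ∑ i ∈ s, p i * g i u) (∑ i ∈ s, p i • g' i) v := by
  rw [hasGradientAt_iff_hasFDerivAt, map_sum]
  refine HasFDerivAt.fun_sum fun i hi => ?_
  rw [map_smul]
  exact (hg i hi).hasFDerivAt.const_mul (p i)

theorem saga_variance_bound_general (hp₀ : ∀ i ∈ s, 0 ≤ p i) (hp : ∑ i ∈ s, p i = 1)
    {g : ι → E → ℝ} {g' : ι → E → E} (hg : ∀ i ∈ s, ∀ v, HasGradientAt (g i) (g' i v) v)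
    {G : E → ℝ} {G' : E → E} (hG : ∀ v, G v = ∑ i ∈ s, p i * g i v)
    (hG' : ∀ v, HasGradientAt G (G' v) v)
    (φ : ι → E) (w wstar : E) {α : ℝ} (hα : 0 < α)
    {X : ι → E} (hX : ∀ j ∈ s, X j = g' j w - g' j (φ j) + ∑ i ∈ s, p i • g' i (φ i) - G' wstar) :
    ∑ j ∈ s, p j • X j = G' w - G' wstar ∧
    ∑ j ∈ s, p j * ‖X j‖ ^ 2 ≤
      (1 + α⁻¹) * ∑ j ∈ s, p j * ‖g' j (φ j) - g' j wstar‖ ^ 2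
        + (1 + α) * ∑ j ∈ s, p j * ‖g' j w - g' j wstar‖ ^ 2
        - α * ‖G' w - G' wstar‖ ^ 2 := by
  have gradient_mean (v : E) : G' v = ∑ i ∈ s, p i • g' i v :=
    (hG' v).unique (funext hG ▸ hasGradientAt_sum_mul fun i hi => hg i hi v)
  have mean_sub (x : ι → E) :
      ∑ i ∈ s, p i • (x i - g' i wstar) = ∑ i ∈ s, p i • x i - G' wstar := by
    simp only [smul_sub, Finset.sum_sub_distrib, gradient_mean]
  constructor
  · calc ∑ j ∈ s, p j • X j
        = ∑ j ∈ s, p j • (g' j w - (g' j (φ j) - ∑ i ∈ s, p i • g' i (φ i)) - G' wstar) :=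
          Finset.sum_congr rfl fun j hj => by rw [hX j hj, sub_add]
      _ = G' w - G' wstar := by
          simp only [sum_smul_sub_const hp, smul_sub _ (g' _ w), Finset.sum_sub_distrib,
            sub_self, sub_zero, gradient_mean w]
  · have X_eq : ∀ j ∈ s, X j = (g' j w - g' j wstar) - (g' j (φ j) - g' j wstar)
        + ∑ i ∈ s, p i • (g' i (φ i) - g' i wstar) := fun j hj => by
      rw [hX j hj, mean_sub]; abel
    rw [Finset.sum_congr rfl fun j hj => by rw [X_eq j hj], gradient_mean w, ← mean_sub]
    exact sum_mul_norm_sub_add_mean_sq_le hp₀ hp _ _ hα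

end Saga

/-- (Third auxiliary lemma for A-SAGA.) With
`X_j = ∇g_j(w) − ∇g_j(φ_j) + (1/n)·Σ_i ∇g_i(φ_i) − ∇g(w_*)`, the uniform average over
`j` satisfies `(1/n)·Σ_j X_j = ∇g(w) − ∇g(w_*)`, and
`(1/n)·Σ_j ‖X_j‖² ≤ (1+α⁻¹)·(1/n)·Σ_j ‖∇g_j(φ_j)−∇g_j(w_*)‖²
  + (1+α)·(1/n)·Σ_j ‖∇g_j(w)−∇g_j(w_*)‖² − α·‖∇g(w)−∇g(w_*)‖²`. -/
theorem saga_variance_bound {D n : ℕ} (hn : 0 < n)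
    (g : Fin n → EuclideanSpace ℝ (Fin D) → ℝ)
    (g' : Fin n → EuclideanSpace ℝ (Fin D) → EuclideanSpace ℝ (Fin D))
    (hdiff : ∀ i w, HasGradientAt (g i) (g' i w) w)
    (G : EuclideanSpace ℝ (Fin D) → ℝ)
    (G' : EuclideanSpace ℝ (Fin D) → EuclideanSpace ℝ (Fin D))
    (hG : ∀ w, G w = (1 / n : ℝ) * ∑ i, g i w)
    (hG' : ∀ w, HasGradientAt G (G' w) w)
    (φ : Fin n → EuclideanSpace ℝ (Fin D))
    (w wstar : EuclideanSpace ℝ (Fin D))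
    (α : ℝ) (hα : 0 < α)
    (X : Fin n → EuclideanSpace ℝ (Fin D))
    (hX : ∀ j, X j = g' j w - g' j (φ j)
      + (1 / n : ℝ) • ∑ i, g' i (φ i) - G' wstar) :
    (1 / n : ℝ) • ∑ j, X j = G' w - G' wstar ∧
    (1 / n : ℝ) * ∑ j, ‖X j‖ ^ 2 ≤
      (1 + α⁻¹) * ((1 / n : ℝ) * ∑ j, ‖g' j (φ j) - g' j wstar‖ ^ 2)
        + (1 + α) * ((1 / n : ℝ) * ∑ j, ‖g' j w - g' j wstar‖ ^ 2)
        - α * ‖G' w - G' wstar‖ ^ 2 := by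
  have sum_weights : ∑ _j : Fin n, (1 / n : ℝ) = 1 := by simp [hn.ne']
  simp only [Finset.mul_sum _ _ (1 / n : ℝ), Finset.smul_sum] at hG hX ⊢
  exact saga_variance_bound_general (fun _ _ => by positivity) sum_weights (fun i _ => hdiff i)
    hG hG' φ w wstar hα fun j _ => hX j
end

section
/- Let μ > 0, M > 0, and let η ≥ 1 be a natural number. Define γ_t = η/(μ·(t+η)) and p_t = 1/(4·√(t+η)) for integers t ≥ 1. Let (a_t)_{t≥1} be nonnegative real numbers satisfying a_1 ≤ 4η²M/(μ²·(1+η)) and, for every t ≥ 1, a_{t+1} ≤ a_t + γ_t²·M − 2·γ_t·(1 − p_t)·μ·a_t + 2·γ_t·p_t·√M·√(a_t). Then for every t ≥ 1: a_t ≤ 4η²M/(μ²·(t+η)). -/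
/-!
Write `s = t + η` and `R = η√M/μ`, so that the step size satisfies `γ_t √M = R/s`. The only
nonlinear term of the recursion, `2 γ_t p_t √M √a_t`, is at most `R²/(2s²) + a_t/(8s)` by AM-GM.
Since `η (1 - p_t) ≥ 3/4`, what remains is the linear recursion
`a_{t+1} ≤ (1 - (11/8)/s) a_t + (3/2) R²/s²`, to which Chung's lemma applies. The AM-GM weights are
those for which equality holds at the target `a_t = 4R²/s`, so linearizing does not worsen the
constant `4`.
-/

lemma one_sub_div_mul_add_le_div_add_one {c C β s x : ℝ} (hC : 0 ≤ C) (hs : 0 < s) (hcs : c ≤ s)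
    (hβ : β ≤ (c - 1) * C) (hx : x ≤ C / s) :
    (1 - c / s) * x + β / s ^ 2 ≤ C / (s + 1) := by
  have hcontract : 0 ≤ 1 - c / s := sub_nonneg.mpr ((div_le_one hs).mpr hcs)
  calc (1 - c / s) * x + β / s ^ 2
      ≤ (1 - c / s) * (C / s) + (c - 1) * C / s ^ 2 := by gcongr
    _ = C * ((s - 1) / s ^ 2) := by field_simp; ring
    _ ≤ C * (1 / (s + 1)) := by
        refine mul_le_mul_of_nonneg_left ?_ hC
        rw [div_le_div_iff₀ (by positivity) (by positivity)]
        linarith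
    _ = C / (s + 1) := mul_one_div C (s + 1)

/-- Chung's lemma for the rate `1/t`, in non-asymptotic form. -/
lemma le_div_of_chung_recursion {c C β η : ℝ} {u : ℕ → ℝ} {m : ℕ} (hC : 0 ≤ C)
    (hm : 0 < m + η) (hcm : c ≤ m + η) (hβ : β ≤ (c - 1) * C) (hu : u m ≤ C / (m + η))
    (hrec : ∀ t : ℕ, m ≤ t → u (t + 1) ≤ (1 - c / (t + η)) * u t + β / (t + η) ^ 2)
    {t : ℕ} (ht : m ≤ t) : u t ≤ C / (t + η) := by
  induction t, ht using Nat.le_induction with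
  | base => exact hu
  | succ t hmt ih =>
    have hmt' : (m : ℝ) ≤ t := Nat.cast_le.mpr hmt
    calc u (t + 1) ≤ (1 - c / (t + η)) * u t + β / (t + η) ^ 2 := hrec t hmt
      _ ≤ C / (t + η + 1) :=
          one_sub_div_mul_add_le_div_add_one hC (by linarith) (by linarith) hβ ih
      _ = C / ((t + 1 : ℕ) + η) := by push_cast; ring

lemma two_mul_div_mul_mul_sqrt_le {R s δ p x : ℝ} (hR : 0 ≤ R) (hs : 0 < s) (hx : 0 ≤ x)
    (hp : p ≤ δ / √s) :
    2 * (R / s) * p * √x ≤ R ^ 2 / (2 * s ^ 2) + 2 * δ ^ 2 * x / s := by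
  calc 2 * (R / s) * p * √x
      ≤ 2 * (R / s) * (δ / √s) * √x := by gcongr
    _ = 2 * (R / s) * (2 * δ * √x / √s) / 2 := by ring
    _ ≤ ((R / s) ^ 2 + (2 * δ * √x / √s) ^ 2) / 2 := by
        gcongr
        exact two_mul_le_add_sq _ _
    _ = R ^ 2 / (2 * s ^ 2) + 2 * δ ^ 2 * x / s := by
        simp only [div_pow, mul_pow, Real.sq_sqrt hx, Real.sq_sqrt hs.le]
        ring

lemma three_quarters_le_mul_one_sub {η s p : ℝ} (hη : 1 ≤ η) (hs : 1 ≤ s)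
    (hp : p ≤ 1 / 4 / √s) : 3 / 4 ≤ η * (1 - p) := by
  have hp' : p ≤ 1 / 4 := hp.trans (div_le_self (by norm_num) (Real.one_le_sqrt.mpr hs))
  calc (3 / 4 : ℝ) ≤ 1 - p := by linarith
    _ ≤ η * (1 - p) := le_mul_of_one_le_left (by linarith) hη

lemma subgradient_step_le_linear {μ M η s p x : ℝ} (hμ : 0 < μ) (hM : 0 ≤ M) (hη : 0 ≤ η)
    (hs : 0 < s) (hx : 0 ≤ x) (hp : p ≤ 1 / 4 / √s) (hηp : 3 / 4 ≤ η * (1 - p)) :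
    x + (η / (μ * s)) ^ 2 * M - 2 * (η / (μ * s)) * (1 - p) * μ * x
        + 2 * (η / (μ * s)) * p * √M * √x
      ≤ (1 - 11 / 8 / s) * x + 3 / 2 * (η ^ 2 * M / μ ^ 2) / s ^ 2 := by
  set R := η * √M / μ with hRdef
  have hR : 0 ≤ R := by positivity
  have hR_sq : R ^ 2 = η ^ 2 * M / μ ^ 2 := by
    rw [hRdef, div_pow, mul_pow, Real.sq_sqrt hM]
  have hvariance : (η / (μ * s)) ^ 2 * M = R ^ 2 / s ^ 2 := by
    rw [hR_sq]; field_simp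
  have hdrift : 3 / 2 / s * x ≤ 2 * (η / (μ * s)) * (1 - p) * μ * x :=
    calc 3 / 2 / s * x = 2 * (3 / 4) / s * x := by ring
      _ ≤ 2 * (η * (1 - p)) / s * x := by gcongr
      _ = 2 * (η / (μ * s)) * (1 - p) * μ * x := by field_simp
  have hfailure : 2 * (η / (μ * s)) * p * √M * √x ≤ R ^ 2 / (2 * s ^ 2) + x / (8 * s) :=
    calc 2 * (η / (μ * s)) * p * √M * √x = 2 * (R / s) * p * √x := by
          rw [hRdef]; field_simp
      _ ≤ R ^ 2 / (2 * s ^ 2) + 2 * (1 / 4) ^ 2 * x / s :=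
          two_mul_div_mul_mul_sqrt_le hR hs hx hp
      _ = R ^ 2 / (2 * s ^ 2) + x / (8 * s) := by ring
  calc x + (η / (μ * s)) ^ 2 * M - 2 * (η / (μ * s)) * (1 - p) * μ * x
        + 2 * (η / (μ * s)) * p * √M * √x
      ≤ x + R ^ 2 / s ^ 2 - 3 / 2 / s * x + (R ^ 2 / (2 * s ^ 2) + x / (8 * s)) := by
        rw [hvariance]; gcongr
    _ = (1 - 11 / 8 / s) * x + 3 / 2 * R ^ 2 / s ^ 2 := by ring
    _ = (1 - 11 / 8 / s) * x + 3 / 2 * (η ^ 2 * M / μ ^ 2) / s ^ 2 := by rw [hR_sq]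

theorem asubsgdp_iterate_convergence_general {μ M η : ℝ} (hμ : 0 < μ) (hM : 0 ≤ M) (hη : 1 ≤ η)
    {γ p a : ℕ → ℝ}
    (hγ : ∀ t : ℕ, 1 ≤ t → γ t = η / (μ * (t + η)))
    (hp : ∀ t : ℕ, 1 ≤ t → p t ≤ 1 / (4 * √(t + η)))
    (ha0 : ∀ t : ℕ, 1 ≤ t → 0 ≤ a t)
    (ha1 : a 1 ≤ 4 * η ^ 2 * M / (μ ^ 2 * (1 + η)))
    (hrec : ∀ t : ℕ, 1 ≤ t →
      a (t + 1) ≤ a t + (γ t) ^ 2 * M - 2 * γ t * (1 - p t) * μ * a t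
        + 2 * γ t * p t * √M * √(a t))
    {t : ℕ} (ht : 1 ≤ t) : a t ≤ 4 * η ^ 2 * M / (μ ^ 2 * (t + η)) := by
  have hbound (s : ℝ) : 4 * η ^ 2 * M / (μ ^ 2 * s) = 4 * (η ^ 2 * M / μ ^ 2) / s := by ring
  have hlinear (t : ℕ) (ht : 1 ≤ t) : a (t + 1) ≤
      (1 - 11 / 8 / (t + η)) * a t + 3 / 2 * (η ^ 2 * M / μ ^ 2) / (t + η) ^ 2 := by
    have hs : 1 ≤ t + η := le_add_of_nonneg_of_le t.cast_nonneg hη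
    have hpt : p t ≤ 1 / 4 / √(t + η) := (hp t ht).trans_eq (div_div _ _ _).symm
    refine (hrec t ht).trans ?_
    rw [hγ t ht]
    exact subgradient_step_le_linear hμ hM (by linarith) (by linarith) (ha0 t ht) hpt
      (three_quarters_le_mul_one_sub hη hs hpt)
  rw [hbound]
  refine le_div_of_chung_recursion (m := 1) (by positivity) ?_ ?_ (by linarith) ?_ hlinear ht
  · push_cast; linarith
  · push_cast; linarith
  · rwa [Nat.cast_one, ← hbound]

/-- (Convergence of the iterates of A-SubSGDP.) With step sizes
`γ_t = η/(μ(t+η))` and failure probabilities `p_t = 1/(4√(t+η))`, any nonnegative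
sequence satisfying `a_1 ≤ 4η²M/(μ²(1+η))` and the recursion
`a_{t+1} ≤ a_t + γ_t²M − 2γ_t(1−p_t)μ·a_t + 2γ_t p_t √M·√(a_t)` obeys
`a_t ≤ 4η²M/(μ²(t+η))` for all `t ≥ 1`. -/
theorem asubsgdp_iterate_convergence (μ M : ℝ) (hμ : 0 < μ) (hM : 0 < M)
    (η : ℕ) (hη : 1 ≤ η)
    (γ p : ℕ → ℝ)
    (hγ : ∀ t : ℕ, γ t = (η : ℝ) / (μ * ((t : ℝ) + η)))
    (hp : ∀ t : ℕ, p t = 1 / (4 * Real.sqrt ((t : ℝ) + η)))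
    (a : ℕ → ℝ)
    (ha0 : ∀ t : ℕ, 1 ≤ t → 0 ≤ a t)
    (ha1 : a 1 ≤ 4 * (η : ℝ) ^ 2 * M / (μ ^ 2 * (1 + η)))
    (hrec : ∀ t : ℕ, 1 ≤ t →
      a (t + 1) ≤ a t + (γ t) ^ 2 * M - 2 * γ t * (1 - p t) * μ * a t
        + 2 * γ t * p t * Real.sqrt M * Real.sqrt (a t)) :
    ∀ t : ℕ, 1 ≤ t → a t ≤ 4 * (η : ℝ) ^ 2 * M / (μ ^ 2 * ((t : ℝ) + η)) :=
  fun _ ht => asubsgdp_iterate_convergence_general hμ hM.le (Nat.one_le_cast.mpr hη)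
    (fun t _ => hγ t) (fun t _ => (hp t).le) ha0 ha1 hrec ht
end

section
/- Let μ > 0, M > 0, let η ≥ 1 and T ≥ 0 be natural numbers, and define weights p(t) = ∏_{k=1}^{η}(t+k) / Σ_{s=0}^{T} ∏_{k=1}^{η}(s+k) for t = 0,…,T. Let e_0,…,e_T be nonnegative real numbers satisfying e_t ≤ (4/3)·( η·M/(μ·(t+η)) + η²·M/(μ·(t+η)^{3/2}) ) for each t. Then Σ_{t=0}^{T} p(t)·e_t ≤ 16·η^{3/2}·M / (3·μ·(T+η)). -/
/-
The weights are ratios of binomial coefficients, `p(t) = C(t+η, η) / C(T+η+1, η+1)`, by the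
hockey-stick identity. Since `t + η ≥ η ≥ 1`, both terms of the rate are at most a constant times
`η^{3/2} / (t+η)`. Absorption turns `C(t+η, η) / (t+η)` into `C(t+η-1, η-1) / η`, and a second
hockey-stick sum gives the average of `1 / (t+η)` exactly: `(η+1) / (η (T+η+1)) ≤ 2 / (T+η)`.
-/

open Finset
open scoped Nat

section PolynomialDecayWeights

variable {F : Type*} [Field F]

theorem prod_range_add_add_one_eq_factorial_mul_choose {R : Type*} [CommSemiring R] (t m : ℕ) :
    ∏ k ∈ range m, ((t : R) + k + 1) = m ! * (t + m).choose m := by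
  rw [← Nat.cast_mul, ← Nat.ascFactorial_eq_factorial_mul_choose, Nat.ascFactorial_eq_prod_range]
  push_cast
  exact prod_congr rfl fun k _ => by ring

/-- The weight `p(t)` of iterate `t` in the polynomial-decay average of order `m` over the iterates
`0, …, T`: proportional to `(t+1)(t+2)⋯(t+m)` and, in characteristic zero, of total mass `1` over
`t ≤ T`. The same formula is used for `t > T`, so averages must be taken over `range (T + 1)`. -/
def polyDecayWeight (m T t : ℕ) : F :=
  (∏ k ∈ range m, ((t : F) + k + 1)) / ∑ s ∈ range (T + 1), ∏ k ∈ range m, ((s : F) + k + 1)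

theorem polyDecayWeight_eq_choose_div_choose [CharZero F] (m T t : ℕ) :
    (polyDecayWeight m T t : F) = (t + m).choose m / (T + m + 1).choose (m + 1) := by
  simp only [polyDecayWeight, prod_range_add_add_one_eq_factorial_mul_choose]
  rw [← mul_sum, ← Nat.cast_sum, Nat.sum_range_add_choose,
    mul_div_mul_left _ _ (Nat.cast_ne_zero.mpr m.factorial_ne_zero)]

theorem polyDecayWeight_nonneg [LinearOrder F] [IsStrictOrderedRing F] (m T t : ℕ) :
    0 ≤ (polyDecayWeight m T t : F) := by
  rw [polyDecayWeight]
  positivity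

theorem choose_add_one_add_one_div_add_one [CharZero F] (n k : ℕ) :
    ((n + 1).choose (k + 1) : F) / (n + 1) = n.choose k / (k + 1) := by
  rw [div_eq_div_iff n.cast_add_one_ne_zero k.cast_add_one_ne_zero, mul_comm (n.choose k : F)]
  exact_mod_cast (Nat.add_one_mul_choose_eq n k).symm

theorem sum_choose_div_add [CharZero F] {m : ℕ} (hm : m ≠ 0) (T : ℕ) :
    ∑ t ∈ range (T + 1), ((t + m).choose m : F) / (t + m) = (T + m).choose m / m := by
  obtain ⟨n, rfl⟩ := Nat.exists_eq_add_one_of_ne_zero hm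
  have absorb (t : ℕ) : ((t + (n + 1)).choose (n + 1) : F) / (t + (n + 1 : ℕ)) =
      (t + n).choose n / (n + 1 : ℕ) := by
    simpa [add_assoc] using choose_add_one_add_one_div_add_one (F := F) (t + n) n
  simp only [absorb]
  rw [← sum_div, ← Nat.cast_sum, Nat.sum_range_add_choose, add_assoc]

theorem sum_polyDecayWeight_div_add [CharZero F] {m : ℕ} (hm : m ≠ 0) (T : ℕ) :
    ∑ t ∈ range (T + 1), (polyDecayWeight m T t : F) / (t + m) = (m + 1) / (m * (T + m + 1)) := by
  have hN : (T : F) + m + 1 ≠ 0 := by exact_mod_cast (T + m).succ_ne_zero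
  have hk : (m : F) + 1 ≠ 0 := m.cast_add_one_ne_zero
  have hm' : (m : F) ≠ 0 := Nat.cast_ne_zero.mpr hm
  have hC : ((T + m + 1).choose (m + 1) : F) ≠ 0 :=
    Nat.cast_ne_zero.mpr (Nat.choose_pos (by lia)).ne'
  have absorb := choose_add_one_add_one_div_add_one (F := F) (T + m) m
  rw [Nat.cast_add, div_eq_div_iff hN hk] at absorb
  calc ∑ t ∈ range (T + 1), (polyDecayWeight m T t : F) / (t + m)
      = (∑ t ∈ range (T + 1), ((t + m).choose m : F) / (t + m)) /
          (T + m + 1).choose (m + 1) := by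
        simp only [polyDecayWeight_eq_choose_div_choose, sum_div, div_right_comm]
    _ = (T + m).choose m / m / (T + m + 1).choose (m + 1) := by rw [sum_choose_div_add hm]
    _ = (m + 1) / (m * (T + m + 1)) := by
        rw [div_div, div_eq_div_iff (mul_ne_zero hm' hC) (mul_ne_zero hm' hN)]
        linear_combination -(m : F) * absorb

theorem sum_polyDecayWeight_div_add_le [LinearOrder F] [IsStrictOrderedRing F]
    {m : ℕ} (hm : m ≠ 0) (T : ℕ) :
    ∑ t ∈ range (T + 1), (polyDecayWeight m T t : F) / (t + m) ≤ 2 / (T + m) := by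
  have hm1 : (1 : F) ≤ m := Nat.one_le_cast.mpr (Nat.one_le_iff_ne_zero.mpr hm)
  have hnum : (m : F) + 1 ≤ m * 2 := by linarith
  have hden : (m : F) * (T + m) ≤ m * (T + m + 1) :=
    mul_le_mul_of_nonneg_left (le_add_of_nonneg_right zero_le_one) m.cast_nonneg
  calc ∑ t ∈ range (T + 1), (polyDecayWeight m T t : F) / (t + m)
      = (m + 1) / (m * (T + m + 1)) := sum_polyDecayWeight_div_add hm T
    _ ≤ (m * 2) / (m * (T + m)) := div_le_div₀ (by positivity) hnum (by positivity) hden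
    _ = 2 / (T + m) := mul_div_mul_left _ _ (by positivity)

theorem sum_polyDecayWeight_mul_le_of_le_div [LinearOrder F] [IsStrictOrderedRing F]
    {m T : ℕ} (hm : m ≠ 0) {K : F} (hK : 0 ≤ K) {e : ℕ → F}
    (he : ∀ t ∈ range (T + 1), e t ≤ K / (t + m)) :
    ∑ t ∈ range (T + 1), polyDecayWeight m T t * e t ≤ K * (2 / (T + m)) := by
  calc ∑ t ∈ range (T + 1), polyDecayWeight m T t * e t
      ≤ ∑ t ∈ range (T + 1), polyDecayWeight m T t * (K / (t + m)) :=
        sum_le_sum fun t ht => mul_le_mul_of_nonneg_left (he t ht) (polyDecayWeight_nonneg m T t)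
    _ = K * ∑ t ∈ range (T + 1), (polyDecayWeight m T t : F) / (t + m) := by
        simp only [mul_sum, mul_div_left_comm]
    _ ≤ K * (2 / (T + m)) := mul_le_mul_of_nonneg_left (sum_polyDecayWeight_div_add_le hm T) hK

end PolynomialDecayWeights

theorem rpow_add_div_rpow_add_le {a x s : ℝ} (ha : 0 < a) (hax : a ≤ x) (hs : 0 ≤ s) (q r : ℝ) :
    a ^ (q + s) / x ^ (r + s) ≤ a ^ q / x ^ r := by
  have hx : 0 < x := ha.trans_le hax
  rw [Real.rpow_add ha, Real.rpow_add hx, mul_div_mul_comm]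
  exact mul_le_of_le_one_right (by positivity)
    (div_le_one_of_le₀ (Real.rpow_le_rpow ha.le hax hs) (by positivity))

theorem div_add_rpow_add_div_rpow_one_add_le {a x q s : ℝ} (ha : 1 ≤ a) (hax : a ≤ x)
    (hq : 1 ≤ q) (hs : 0 ≤ s) :
    a / x + a ^ (q + s) / x ^ (1 + s) ≤ 2 * a ^ q / x := by
  have hx : 0 ≤ x := by linarith
  have first : a / x ≤ a ^ q / x :=
    div_le_div_of_nonneg_right (Real.self_le_rpow_of_one_le ha hq) hx
  have second : a ^ (q + s) / x ^ (1 + s) ≤ a ^ q / x := by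
    simpa only [Real.rpow_one] using rpow_add_div_rpow_add_le (by linarith) hax hs q 1
  calc a / x + a ^ (q + s) / x ^ (1 + s) ≤ a ^ q / x + a ^ q / x := add_le_add first second
    _ = 2 * a ^ q / x := by ring

theorem div_add_sq_div_rpow_three_halves_le {a x : ℝ} (ha : 1 ≤ a) (hax : a ≤ x) :
    a / x + a ^ 2 / x ^ ((3 : ℝ) / 2) ≤ 2 * a ^ ((3 : ℝ) / 2) / x := by
  calc a / x + a ^ 2 / x ^ ((3 : ℝ) / 2)
      = a / x + a ^ ((3 : ℝ) / 2 + 1 / 2) / x ^ ((1 : ℝ) + 1 / 2) := by norm_num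
    _ ≤ 2 * a ^ ((3 : ℝ) / 2) / x :=
        div_add_rpow_add_div_rpow_one_add_le ha hax (by norm_num) (by norm_num)

/-- (Convergence of A-SubSGDP with polynomial-decay averaging.)
With weights `p(t) ∝ (t+1)(t+2)⋯(t+η)` normalized over `t = 0,…,T`, if each expected
suboptimality satisfies `e_t ≤ (4/3)(ηM/(μ(t+η)) + η²M/(μ(t+η)^{3/2}))`, then the
weighted average satisfies `Σ_{t=0}^T p(t)·e_t ≤ 16·η^{3/2}·M/(3μ(T+η))`. -/
theorem asubsgdp_weighted_average_convergence (μ M : ℝ) (hμ : 0 < μ) (hM : 0 < M)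
    (η T : ℕ) (hη : 1 ≤ η)
    (p : ℕ → ℝ)
    (hp : ∀ t : ℕ, p t =
      (∏ k ∈ Finset.range η, ((t : ℝ) + k + 1)) /
        ∑ s ∈ Finset.range (T + 1), ∏ k ∈ Finset.range η, ((s : ℝ) + k + 1))
    (e : ℕ → ℝ)
    (he0 : ∀ t ∈ Finset.range (T + 1), 0 ≤ e t)
    (he : ∀ t ∈ Finset.range (T + 1),
      e t ≤ (4 / 3) * ((η : ℝ) * M / (μ * ((t : ℝ) + η))
        + (η : ℝ) ^ 2 * M / (μ * ((t : ℝ) + η) ^ ((3 : ℝ) / 2)))) :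
    ∑ t ∈ Finset.range (T + 1), p t * e t ≤
      16 * (η : ℝ) ^ ((3 : ℝ) / 2) * M / (3 * μ * ((T : ℝ) + η)) := by
  have hη' : (1 : ℝ) ≤ η := Nat.one_le_cast.mpr hη
  obtain rfl : p = polyDecayWeight η T := funext hp
  have rate : ∀ t ∈ range (T + 1),
      e t ≤ 4 / 3 * (M / μ) * (2 * (η : ℝ) ^ ((3 : ℝ) / 2)) / (t + η) := fun t ht => by
    calc e t ≤ _ := he t ht
      _ = 4 / 3 * (M / μ) * (η / ((t : ℝ) + η) + η ^ 2 / ((t : ℝ) + η) ^ ((3 : ℝ) / 2)) := by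
          field_simp
      _ ≤ 4 / 3 * (M / μ) * (2 * (η : ℝ) ^ ((3 : ℝ) / 2) / (t + η)) := by
          gcongr
          exact div_add_sq_div_rpow_three_halves_le hη' (le_add_of_nonneg_left t.cast_nonneg)
      _ = _ := (mul_div_assoc _ _ _).symm
  calc ∑ t ∈ range (T + 1), polyDecayWeight η T t * e t
      ≤ 4 / 3 * (M / μ) * (2 * (η : ℝ) ^ ((3 : ℝ) / 2)) * (2 / (T + η)) :=
        sum_polyDecayWeight_mul_le_of_le_div (by lia) (by positivity) rate
    _ = 16 * (η : ℝ) ^ ((3 : ℝ) / 2) * M / (3 * μ * (T + η)) := by field_simp; norm_num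
end
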